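/- Let ‖·‖ be a norm on ℝ^d with unit ball U and let (u^i_1)_{i=1}^m, ..., (u^i_n)_{i=1}^m be n sequences in U whose union is zero-sum. Then there exist permutations π_1,...,π_n of {1,...,m} such that for every k ∈ {1,...,m}, ‖∑_{i=1}^k ∑_{j=1}^n u^{π_j(i)}_j‖ ≤ min{n·d, 40·d^5}. -/

import Mathlib

/-!
Let there be `n` colors with `m` vectors each, in dimension `d`. Call weights in `[0, 1]` on the
vectors *balanced at level `k`* if they sum to `k` in every color and the weighted vector sum
vanishes. The constant weight `1` is balanced at level `m`, and scaling takes level `k + 1` to level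
`k` without enlarging the support. At an extreme point of the polytope of balanced weights, the
entries strictly between `0` and `1` outnumber the colors in which they occur by at most `d`, so the
support exceeds its least possible size `n * k` by at most `d`. Going down from level `m` through
extreme points therefore gives nested supports, and listing every color in the order in which its
vectors enter these supports makes them almost equal to the sets of vectors used by the partial
sums. Subtracting the vanishing weighted sum from the `k`-th partial sum leaves a combination with
small coefficients: the weight at level `k` yields the bound `2 * d`, and the one at level `k - d`
yields `n * d`.
-/

open Finset Filter Topology Module

lemma exists_ne_zero_map_eq_zero_of_finrank_lt_card {ι K V : Type*} [Field K]
    [AddCommGroup V] [Module K V] [FiniteDimensional K V] (f : (ι → K) →ₗ[K] V)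
    {F : Finset ι} (hF : finrank K V < #F) : ∃ z ≠ 0, (∀ p ∉ F, z p = 0) ∧ f z = 0 := by
  let extend : (F → K) →ₗ[K] (ι → K) := Function.ExtendByZero.linearMap K (Subtype.val : F → ι)
  obtain ⟨y, hy, hy0⟩ := (Submodule.ne_bot_iff _).mp
    (LinearMap.ker_ne_bot_of_finrank_lt (f := f ∘ₗ extend) (by simpa using hF))
  refine ⟨extend y, fun h => hy0 ?_, fun p hp => ?_, hy⟩
  · ext p
    simpa [extend, Subtype.val_injective.extend_apply] using congrFun h p
  · exact Function.extend_apply' _ _ _ fun ⟨p', hp'⟩ => hp (hp' ▸ p'.2)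

lemma exists_pos_add_sub_smul_mem_Icc {ι : Type*} [Finite ι] {w z : ι → ℝ}
    (hw : ∀ p, w p ∈ Set.Icc 0 1) (hz : ∀ p, w p ∉ Set.Ioo 0 1 → z p = 0) :
    ∃ t > (0 : ℝ), ∀ p, (w + t • z) p ∈ Set.Icc 0 1 ∧ (w - t • z) p ∈ Set.Icc 0 1 := by
  have near_zero : ∀ᶠ t in 𝓝[>] (0 : ℝ),
      ∀ p, (w + t • z) p ∈ Set.Icc 0 1 ∧ (w - t • z) p ∈ Set.Icc 0 1 := by
    refine eventually_all.mpr fun p => ?_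
    by_cases hp : w p ∈ Set.Ioo 0 1
    · have hadd : Tendsto (fun t : ℝ => (w + t • z) p) (𝓝 0) (𝓝 (w p)) :=
        Continuous.tendsto' (by simp only [Pi.add_apply, Pi.smul_apply]; fun_prop) _ _ (by simp)
      have hsub : Tendsto (fun t : ℝ => (w - t • z) p) (𝓝 0) (𝓝 (w p)) :=
        Continuous.tendsto' (by simp only [Pi.sub_apply, Pi.smul_apply]; fun_prop) _ _ (by simp)
      have hIcc : Set.Icc (0 : ℝ) 1 ∈ 𝓝 (w p) := Icc_mem_nhds hp.1 hp.2
      exact ((hadd.eventually hIcc).and (hsub.eventually hIcc)).filter_mono nhdsWithin_le_nhds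
    · simp [hz p hp, hw p]
  exact (eventually_mem_nhdsWithin.and near_zero).exists

section UnitIntervalSums

variable {ι : Type*} [Fintype ι] {x : ι → ℝ}

lemma card_filter_eq_one_le_sum (hx : ∀ i, x i ∈ Set.Icc 0 1) :
    (#{i | x i = 1} : ℝ) ≤ ∑ i, x i := by
  rw [natCast_card_filter]
  refine sum_le_sum fun i _ => ?_
  split_ifs with h
  · exact h.ge
  · exact (hx i).1

lemma card_filter_eq_one_lt_sum (hx : ∀ i, x i ∈ Set.Icc 0 1) {i₀ : ι} (hi₀ : x i₀ ∈ Set.Ioo 0 1) :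
    (#{i | x i = 1} : ℝ) < ∑ i, x i := by
  rw [natCast_card_filter]
  refine sum_lt_sum (fun i _ => ?_) ⟨i₀, mem_univ _, ?_⟩
  · split_ifs with h
    · exact h.ge
    · exact (hx i).1
  · rw [if_neg hi₀.2.ne]
    exact hi₀.1

lemma sum_le_card_filter_ne_zero (hx : ∀ i, x i ∈ Set.Icc 0 1) : ∑ i, x i ≤ #{i | x i ≠ 0} := by
  rw [natCast_card_filter]
  refine sum_le_sum fun i _ => ?_
  split_ifs with h
  · exact (hx i).2
  · exact (not_not.mp h).le

end UnitIntervalSums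

/-- The entries of `w` lying strictly between `0` and `1`. -/
noncomputable def fractionalEntries {ι : Type*} [Fintype ι] (w : ι → ℝ) : Finset ι :=
  {p | w p ∈ Set.Ioo 0 1}

lemma card_filter_ne_zero_le_card_filter_eq_one_add {ι : Type*} [Fintype ι] {x : ι → ℝ}
    (hx : ∀ i, x i ∈ Set.Icc 0 1) :
    #{i | x i ≠ 0} ≤ #{i | x i = 1} + #(fractionalEntries x) := by
  classical
  refine (card_le_card fun i hi => ?_).trans (card_union_le _ _)
  simp only [fractionalEntries, mem_union, mem_filter, mem_univ, true_and] at hi ⊢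
  rcases (hx i).2.eq_or_lt with h | h
  · exact Or.inl h
  · exact Or.inr ⟨(hx i).1.lt_of_ne' hi, h⟩

section BalancedWeight

variable {I J E : Type*} [Fintype I] [Fintype J] [AddCommGroup E] [Module ℝ E]

/-- A balanced weight at level `k`: a point `w` of the unit cube, with one coordinate for each
vector `a (i, j)` of color `j`, whose sum in every color is `k` and whose weighted vector sum
vanishes. -/
structure IsBalancedWeight (a : I × J → E) (k : ℕ) (w : I × J → ℝ) : Prop where
  mem_Icc : ∀ p, w p ∈ Set.Icc 0 1
  color_sum : ∀ j, ∑ i, w (i, j) = k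
  vector_sum : ∑ p, w p • a p = 0

/-- A balanced weight at level `k` whose support exceeds the least possible size
`Fintype.card J * k` by at most the dimension. -/
structure IsSparseBalancedWeight (a : I × J → E) (k : ℕ) (w : I × J → ℝ) : Prop
    extends IsBalancedWeight a k w where
  card_support_le : #{p | w p ≠ 0} ≤ Fintype.card J * k + finrank ℝ E

variable {a : I × J → E} {k : ℕ} {w : I × J → ℝ}

lemma IsBalancedWeight.le_card_color_support (hw : IsBalancedWeight a k w) (j : J) :
    k ≤ #{i | w (i, j) ≠ 0} := by
  have : (k : ℝ) ≤ #{i | w (i, j) ≠ 0} :=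
    hw.color_sum j ▸ sum_le_card_filter_ne_zero fun i => hw.mem_Icc (i, j)
  exact_mod_cast this

lemma IsBalancedWeight.sum_eq (hw : IsBalancedWeight a k w) :
    ∑ p, w p = Fintype.card J * k := by
  simp [Fintype.sum_prod_type_right, hw.color_sum]

lemma card_filter_eq_sum_card_color (P : I × J → Prop) [DecidablePred P] :
    #{p | P p} = ∑ j, #{i | P (i, j)} := by
  simp only [card_filter, Fintype.sum_prod_type_right]

lemma IsSparseBalancedWeight.card_color_support_le (hw : IsSparseBalancedWeight a k w) (j : J) :
    #{i | w (i, j) ≠ 0} ≤ k + finrank ℝ E := by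
  classical
  have hothers : #(univ.erase j) * k ≤ ∑ j' ∈ univ.erase j, #{i | w (i, j') ≠ 0} :=
    card_nsmul_le_sum _ _ _ fun j' _ => hw.le_card_color_support j'
  have htotal := hw.card_support_le
  rw [card_filter_eq_sum_card_color, ← add_sum_erase _ _ (mem_univ j), ← card_univ,
    ← card_erase_add_one (mem_univ j), add_mul, one_mul] at htotal
  omega

lemma IsBalancedWeight.card_ones_add_card_fractional_colors_le [DecidableEq J]
    (hw : IsBalancedWeight a k w) :
    #{p | w p = 1} + #((fractionalEntries w).image Prod.snd) ≤ Fintype.card J * k := by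
  set T := (fractionalEntries w).image Prod.snd
  have hcolor (j : J) : #{i | w (i, j) = 1} + (if j ∈ T then 1 else 0) ≤ k := by
    split_ifs with hj
    · obtain ⟨⟨i, j⟩, hp, rfl⟩ := mem_image.mp hj
      have hlt : (#{i | w (i, j) = 1} : ℝ) < k := hw.color_sum j ▸
        card_filter_eq_one_lt_sum (fun i => hw.mem_Icc (i, j)) (mem_filter.mp hp).2
      exact_mod_cast hlt
    · have hle : (#{i | w (i, j) = 1} : ℝ) ≤ k :=
        hw.color_sum j ▸ card_filter_eq_one_le_sum fun i => hw.mem_Icc (i, j)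
      exact_mod_cast hle
  calc #{p | w p = 1} + #T
      = ∑ j, (#{i | w (i, j) = 1} + if j ∈ T then 1 else 0) := by
        rw [sum_add_distrib, card_filter_eq_sum_card_color]
        simp
    _ ≤ Fintype.card J * k := by
        simpa using sum_le_sum fun j (_ : j ∈ univ) => hcolor j

lemma IsBalancedWeight.div_add_one_smul (hw : IsBalancedWeight a (k + 1) w) :
    IsBalancedWeight a k ((k / (k + 1) : ℝ) • w) where
  mem_Icc p := by
    have hk : (k / (k + 1) : ℝ) ≤ 1 := div_le_one_of_le₀ (by linarith) (by positivity)
    exact ⟨mul_nonneg (by positivity) (hw.mem_Icc p).1,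
      mul_le_one₀ hk (hw.mem_Icc p).1 (hw.mem_Icc p).2⟩
  color_sum j := by
    simp only [Pi.smul_apply, smul_eq_mul, ← mul_sum, hw.color_sum]
    push_cast
    field_simp
  vector_sum := by
    simp only [Pi.smul_apply, smul_assoc, ← smul_sum, hw.vector_sum, smul_zero]

lemma exists_balanced_direction [FiniteDimensional ℝ E] [DecidableEq J] (a : I × J → E)
    {F : Finset (I × J)} (hF : #(F.image Prod.snd) + finrank ℝ E < #F) :
    ∃ z : I × J → ℝ, z ≠ 0 ∧ (∀ p ∉ F, z p = 0) ∧ (∀ j, ∑ i, z (i, j) = 0) ∧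
      ∑ p, z p • a p = 0 := by
  let colorSums : (I × J → ℝ) →ₗ[ℝ] (F.image Prod.snd → ℝ) :=
    LinearMap.pi fun j => ∑ i, LinearMap.proj (i, (j : J))
  obtain ⟨z, hz, hzF, hker⟩ := exists_ne_zero_map_eq_zero_of_finrank_lt_card
    (colorSums.prod (Fintype.linearCombination ℝ a)) (by simpa using hF)
  obtain ⟨hcolor, hvector⟩ := Prod.mk.inj hker
  refine ⟨z, hz, hzF, fun j => ?_, hvector⟩
  by_cases hj : j ∈ F.image Prod.snd
  · simpa [colorSums] using congrFun hcolor ⟨j, hj⟩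
  · exact sum_eq_zero fun i _ => hzF _ fun h => hj (mem_image_of_mem Prod.snd h)

lemma isCompact_setOf_isBalancedWeight (a : I × J → E) (k : ℕ) (S : Set (I × J)) :
    IsCompact {v | IsBalancedWeight a k v ∧ Function.support v ⊆ S} := by
  have hcolor : IsClosed {v : I × J → ℝ | ∀ j, ∑ i, v (i, j) = k} := by
    simp only [Set.ofPred_forall]
    exact isClosed_iInter fun j => isClosed_eq (by fun_prop) continuous_const
  have hsupport : IsClosed {v : I × J → ℝ | ∀ p ∉ S, v p = 0} := by
    simp only [Set.ofPred_forall]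
    exact isClosed_iInter fun p => isClosed_iInter fun _ =>
      isClosed_eq (continuous_apply p) continuous_const
  have hvector : IsClosed (LinearMap.ker (Fintype.linearCombination ℝ a) : Set (I × J → ℝ)) :=
    Submodule.closed_of_finiteDimensional _
  have heq : {v | IsBalancedWeight a k v ∧ Function.support v ⊆ S} =
      Set.Icc 0 1 ∩ (({v | ∀ j, ∑ i, v (i, j) = (k : ℝ)} ∩ {v | ∀ p ∉ S, v p = 0}) ∩
        LinearMap.ker (Fintype.linearCombination ℝ a)) := by
    ext v
    refine ⟨fun ⟨hv, hS⟩ => ⟨⟨fun p => (hv.mem_Icc p).1, fun p => (hv.mem_Icc p).2⟩,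
      ⟨hv.color_sum, Function.support_subset_iff'.mp hS⟩, hv.vector_sum⟩, ?_⟩
    rintro ⟨⟨h0, h1⟩, ⟨hc, hS⟩, hv⟩
    exact ⟨⟨fun p => ⟨h0 p, h1 p⟩, hc, hv⟩, Function.support_subset_iff'.mpr hS⟩
  exact heq ▸ isCompact_Icc.inter_right ((hcolor.inter hsupport).inter hvector)

lemma card_fractionalEntries_le_of_mem_extremePoints [FiniteDimensional ℝ E] [DecidableEq J]
    {S : Set (I × J)}
    (hw : w ∈ Set.extremePoints ℝ {v | IsBalancedWeight a k v ∧ Function.support v ⊆ S}) :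
    #(fractionalEntries w) ≤ #((fractionalEntries w).image Prod.snd) + finrank ℝ E := by
  by_contra! hlt
  obtain ⟨⟨hbal, hS⟩, hext⟩ := mem_extremePoints_iff_left.mp hw
  obtain ⟨z, hz, hzF, hcolor, hvector⟩ := exists_balanced_direction a hlt
  obtain ⟨t, ht, hmem⟩ := exists_pos_add_sub_smul_mem_Icc hbal.mem_Icc
    fun p hp => hzF p fun h => hp (mem_filter.mp h).2
  have hperturb (s : ℝ) (hs : ∀ p, (w + s • z) p ∈ Set.Icc 0 1) :
      IsBalancedWeight a k (w + s • z) ∧ Function.support (w + s • z) ⊆ S := by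
    refine ⟨⟨hs, fun j => ?_, ?_⟩, Function.support_subset_iff'.mpr fun p hp => ?_⟩
    · simp [sum_add_distrib, ← mul_sum, hbal.color_sum, hcolor]
    · simp [add_smul, mul_smul, sum_add_distrib, ← smul_sum, hbal.vector_sum, hvector]
    · have hwp : w p = 0 := Function.support_subset_iff'.mp hS p hp
      have hzp : z p = 0 := hzF p (by simp [fractionalEntries, hwp])
      simp [hwp, hzp]
  have hsub : w - t • z = w + (-t) • z := by rw [neg_smul, sub_eq_add_neg]
  have hseg : w ∈ openSegment ℝ (w + t • z) (w - t • z) :=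
    ⟨1 / 2, 1 / 2, by norm_num, by norm_num, by norm_num, by module⟩
  have heq := hext _ (hperturb t fun p => (hmem p).1) _
    (hsub ▸ hperturb (-t) fun p => hsub ▸ (hmem p).2) hseg
  exact hz ((smul_eq_zero.mp (add_eq_left.mp heq)).resolve_left ht.ne')

lemma IsBalancedWeight.exists_isSparseBalancedWeight [FiniteDimensional ℝ E]
    (hw : IsBalancedWeight a k w) :
    ∃ v, IsSparseBalancedWeight a k v ∧ Function.support v ⊆ Function.support w := by
  classical
  obtain ⟨v, hv⟩ := (isCompact_setOf_isBalancedWeight a k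
    (Function.support w)).extremePoints_nonempty ⟨w, hw, subset_rfl⟩
  have hfrac := card_fractionalEntries_le_of_mem_extremePoints hv
  obtain ⟨hbal, hsub⟩ := extremePoints_subset hv
  have hones := hbal.card_ones_add_card_fractional_colors_le
  have hsupp := card_filter_ne_zero_le_card_filter_eq_one_add hbal.mem_Icc
  exact ⟨v, ⟨hbal, by omega⟩, hsub⟩

lemma IsSparseBalancedWeight.exists_monotone_support [FiniteDimensional ℝ E]
    (hw : IsSparseBalancedWeight a k w) :
    ∃ v : Fin (k + 1) → I × J → ℝ, v (Fin.last k) = w ∧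
      (∀ l : Fin (k + 1), IsSparseBalancedWeight a l (v l)) ∧
      Monotone fun l => Function.support (v l) := by
  induction k generalizing w with
  | zero =>
    exact ⟨fun _ => w, rfl, fun l => by simpa [Fin.fin_one_eq_zero l] using hw, monotone_const⟩
  | succ k ih =>
    obtain ⟨w', hw', hsub⟩ := hw.div_add_one_smul.exists_isSparseBalancedWeight
    obtain ⟨v, hlast, hv, hmono⟩ := ih hw'
    refine ⟨Fin.snoc (α := fun _ => I × J → ℝ) v w, Fin.snoc_last _ _, ?_, ?_⟩
    · refine Fin.lastCases ?_ fun l => ?_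
      · simpa using hw
      · simpa using hv l
    · rw [Fin.monotone_iff_le_succ] at hmono ⊢
      refine Fin.lastCases ?_ fun l => ?_
      · simpa [hlast] using hsub.trans (Function.support_const_smul_subset _ _)
      · rw [Fin.succ_castSucc, Fin.snoc_castSucc, Fin.snoc_castSucc]
        exact hmono l

end BalancedWeight

section Prefix

lemma exists_rank_forall_mem_of_isChain {α : Type*} [Finite α] {𝒜 : Set (Finset α)}
    (h𝒜 : IsChain (· ⊆ ·) 𝒜) :
    ∃ rank : α → ℕ, ∀ s ∈ 𝒜, ∀ x ∈ s, ∀ y, rank y ≤ rank x → y ∈ s := by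
  classical
  cases nonempty_fintype α
  let missing (x : α) : Finset (Finset α) := {s | s ∈ 𝒜 ∧ x ∉ s}
  refine ⟨fun x => #(missing x), fun s hs x hx y hle => ?_⟩
  by_contra hy
  have hsub : missing x ⊆ missing y := fun t ht => by
    obtain ⟨ht𝒜, hxt⟩ := (mem_filter.mp ht).2
    have hts : t ⊆ s := (h𝒜.total ht𝒜 hs).resolve_right fun hst => hxt (hst hx)
    exact mem_filter.mpr ⟨mem_univ _, ht𝒜, fun hyt => hy (hts hyt)⟩
  have hlt : missing x ⊂ missing y :=
    (ssubset_iff_of_subset hsub).mpr ⟨s, by simp [missing, hs, hy], by simp [missing, hx]⟩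
  exact hle.not_gt (card_lt_card hlt)

lemma exists_perm_mem_iff_lt_card {m : ℕ} {𝒜 : Set (Finset (Fin m))}
    (h𝒜 : IsChain (· ⊆ ·) 𝒜) :
    ∃ π : Equiv.Perm (Fin m), ∀ s ∈ 𝒜, ∀ i : Fin m, π i ∈ s ↔ (i : ℕ) < #s := by
  obtain ⟨rank, hrank⟩ := exists_rank_forall_mem_of_isChain h𝒜
  let π := Tuple.sort rank
  have hπ : Monotone (rank ∘ π) := Tuple.monotone_sort rank
  refine ⟨π, fun s hs i => ?_⟩
  have hcard : #{i | π i ∈ s} = #s := card_bij' (fun i _ => π i) (fun x _ => π.symm x)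
    (by simp) (by simp) (by simp) (by simp)
  refine ⟨fun hi => ?_, fun hi => ?_⟩
  · have hsub : Iic i ⊆ ({i | π i ∈ s} : Finset (Fin m)) := fun i' hi' => by
      simpa using hrank s hs _ hi _ (hπ (mem_Iic.mp hi'))
    simpa [hcard, Nat.succ_le_iff] using card_le_card hsub
  · by_contra his
    have hsub : ({i | π i ∈ s} : Finset (Fin m)) ⊆ Iio i := fun i' hi' => by
      refine mem_Iio.mpr (not_le.mp fun hle => his ?_)
      exact hrank s hs _ (mem_filter.mp hi').2 _ (hπ hle)
    have hle := card_le_card hsub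
    rw [hcard, Fin.card_Iio] at hle
    omega

variable {m : ℕ} {J : Type*} [Fintype J]

/-- The pairs `(π j i, j)` with `i < k`: in every color `j`, the first `k` elements in the order
`π j`. -/
def prefixEntries (π : J → Equiv.Perm (Fin m)) (k : ℕ) : Finset (Fin m × J) :=
  {p | ((π p.2).symm p.1 : ℕ) < k}

lemma sum_prefixEntries {M : Type*} [AddCommMonoid M] (π : J → Equiv.Perm (Fin m)) (k : ℕ)
    (f : Fin m × J → M) :
    ∑ p ∈ prefixEntries π k, f p = ∑ i ∈ {i : Fin m | (i : ℕ) < k}, ∑ j, f (π j i, j) := by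
  rw [prefixEntries, sum_filter, Fintype.sum_prod_type_right,
    sum_comm (s := {i : Fin m | (i : ℕ) < k})]
  refine sum_congr rfl fun j _ => ?_
  rw [sum_filter, ← Equiv.sum_comp (π j)]
  simp

lemma card_prefixEntries (π : J → Equiv.Perm (Fin m)) {k : ℕ} (hk : k ≤ m) :
    #(prefixEntries π k) = Fintype.card J * k := by
  rw [card_eq_sum_ones, sum_prefixEntries]
  simp [Fin.card_filter_val_lt, hk, mul_comm]

variable {E : Type*} [AddCommGroup E] [Module ℝ E] {a : Fin m × J → E}

lemma exists_perm_prefixEntries_subset {v : Fin (m + 1) → Fin m × J → ℝ}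
    (hv : ∀ l : Fin (m + 1), IsSparseBalancedWeight a l (v l))
    (hmono : Monotone fun l => Function.support (v l)) :
    ∃ π : J → Equiv.Perm (Fin m), ∀ l : Fin (m + 1),
      prefixEntries π l ⊆ ({p | v l p ≠ 0} : Finset _) ∧
        ({p | v l p ≠ 0} : Finset _) ⊆ prefixEntries π (l + finrank ℝ E) := by
  let colorSupport (j : J) (l : Fin (m + 1)) : Finset (Fin m) := {i | v l (i, j) ≠ 0}
  have hchain (j : J) : IsChain (· ⊆ ·) (Set.range (colorSupport j)) :=
    Monotone.isChain_range fun l l' hl i hi => by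
      simpa [colorSupport] using hmono hl (by simpa [colorSupport] using hi)
  choose π hπ using fun j => exists_perm_mem_iff_lt_card (hchain j)
  have hmem (l : Fin (m + 1)) (i : Fin m) (j : J) :
      v l (i, j) ≠ 0 ↔ ((π j).symm i : ℕ) < #(colorSupport j l) := by
    simpa [colorSupport] using hπ j _ ⟨l, rfl⟩ ((π j).symm i)
  refine ⟨π, fun l => ⟨fun ⟨i, j⟩ hp => ?_, fun ⟨i, j⟩ hp => ?_⟩⟩
  · have hlt : ((π j).symm i : ℕ) < l := (mem_filter.mp hp).2
    exact mem_filter.mpr ⟨mem_univ _,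
      (hmem l i j).mpr (hlt.trans_le ((hv l).le_card_color_support j))⟩
  · have hlt := (hmem l i j).mp (mem_filter.mp hp).2
    exact mem_filter.mpr ⟨mem_univ _, hlt.trans_le ((hv l).card_color_support_le j)⟩

end Prefix

lemma sum_abs_indicator_sub_le {ι : Type*} [Fintype ι] [DecidableEq ι] {w : ι → ℝ}
    (hw : ∀ p, w p ∈ Set.Icc 0 1) (B : Finset ι) :
    ∑ p, |(if p ∈ B then 1 else 0) - w p| ≤
      #B - ∑ p, w p + 2 * #(({p | w p ≠ 0} : Finset ι) \ B) := by
  have hpoint (p : ι) : |(if p ∈ B then 1 else 0) - w p| ≤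
      (if p ∈ B then 1 else 0) - w p + 2 * if w p ≠ 0 ∧ p ∉ B then 1 else 0 := by
    obtain ⟨h0, h1⟩ := hw p
    by_cases hB : p ∈ B
    · simp [hB, abs_of_nonneg (sub_nonneg.mpr h1)]
    · rcases eq_or_ne (w p) 0 with hp | hp
      · simp [hB, hp]
      · simp only [hB, hp, if_false, zero_sub, abs_neg, abs_of_nonneg h0, ne_eq,
          not_false_eq_true, and_self, if_true]
        linarith
  refine (sum_le_sum fun p _ => hpoint p).trans_eq ?_
  rw [sum_add_distrib, sum_sub_distrib, ← mul_sum, sum_boole, sum_boole, filter_univ_mem,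
    filter_and_not, filter_univ_mem]

lemma seminorm_sum_le_of_sum_smul_eq_zero {ι E : Type*} [Fintype ι] [DecidableEq ι]
    [AddCommGroup E] [Module ℝ E] (q : Seminorm ℝ E) {a : ι → E} (ha : ∀ p, q (a p) ≤ 1)
    {w : ι → ℝ} (hw : ∀ p, w p ∈ Set.Icc 0 1) (hwa : ∑ p, w p • a p = 0) (B : Finset ι) :
    q (∑ p ∈ B, a p) ≤ #B - ∑ p, w p + 2 * #(({p | w p ≠ 0} : Finset ι) \ B) := by
  have hdiff : ∑ p ∈ B, a p = ∑ p, ((if p ∈ B then 1 else 0) - w p) • a p := by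
    simp [sub_smul, hwa]
  calc q (∑ p ∈ B, a p)
      ≤ ∑ p, q (((if p ∈ B then 1 else 0) - w p) • a p) := by
        rw [hdiff]
        exact le_sum_of_subadditive q (map_zero q).le (map_add_le_add q) _ _
    _ ≤ ∑ p, |(if p ∈ B then 1 else 0) - w p| := by
        gcongr with p
        rw [map_smul_eq_mul, Real.norm_eq_abs]
        exact mul_le_of_le_one_right (abs_nonneg _) (ha p)
    _ ≤ #B - ∑ p, w p + 2 * #(({p | w p ≠ 0} : Finset ι) \ B) := sum_abs_indicator_sub_le hw B

section Bounds

variable {I J E : Type*} [Fintype I] [Fintype J] [AddCommGroup E] [Module ℝ E]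
  {a : I × J → E} {k : ℕ} {w : I × J → ℝ} (q : Seminorm ℝ E)

lemma IsBalancedWeight.seminorm_sum_le_of_support_subset (hw : IsBalancedWeight a k w)
    (ha : ∀ p, q (a p) ≤ 1) {B : Finset (I × J)} (hB : ({p | w p ≠ 0} : Finset _) ⊆ B) :
    q (∑ p ∈ B, a p) ≤ #B - Fintype.card J * k := by
  classical
  have h := seminorm_sum_le_of_sum_smul_eq_zero q ha hw.mem_Icc hw.vector_sum B
  simpa [sdiff_eq_empty_iff_subset.mpr hB, hw.sum_eq] using h

lemma IsSparseBalancedWeight.seminorm_sum_le_of_subset_support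
    (hw : IsSparseBalancedWeight a k w) (ha : ∀ p, q (a p) ≤ 1) {B : Finset (I × J)}
    (hB : B ⊆ ({p | w p ≠ 0} : Finset _)) (hcard : #B = Fintype.card J * k) :
    q (∑ p ∈ B, a p) ≤ 2 * finrank ℝ E := by
  classical
  have h := seminorm_sum_le_of_sum_smul_eq_zero q ha hw.mem_Icc hw.vector_sum B
  have hexcess : #(({p | w p ≠ 0} : Finset _) \ B) ≤ finrank ℝ E := by
    rw [card_sdiff_of_subset hB, hcard, Nat.sub_le_iff_le_add']
    exact hw.card_support_le
  have hexcess' : (#(({p | w p ≠ 0} : Finset _) \ B) : ℝ) ≤ finrank ℝ E := mod_cast hexcess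
  rw [hw.sum_eq, hcard, Nat.cast_mul] at h
  linarith

lemma seminorm_sum_prefixEntries_le {m e : ℕ} {a : Fin m × J → E} (ha : ∀ p, q (a p) ≤ 1)
    {v : Fin (m + 1) → Fin m × J → ℝ} (hv : ∀ l : Fin (m + 1), IsBalancedWeight a l (v l))
    {π : J → Equiv.Perm (Fin m)}
    (hπ : ∀ l : Fin (m + 1), ({p | v l p ≠ 0} : Finset _) ⊆ prefixEntries π (l + e))
    {k : ℕ} (hk : k ≤ m) : q (∑ p ∈ prefixEntries π k, a p) ≤ Fintype.card J * e := by
  rcases le_total e k with hek | hke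
  · let l : Fin (m + 1) := ⟨k - e, by omega⟩
    have hsub : ({p | v l p ≠ 0} : Finset _) ⊆ prefixEntries π k := by
      simpa [l, Nat.sub_add_cancel hek] using hπ l
    refine ((hv l).seminorm_sum_le_of_support_subset q ha hsub).trans_eq ?_
    rw [card_prefixEntries π hk, Nat.cast_mul, Nat.cast_sub hek]
    ring
  · have hnull : IsBalancedWeight a 0 0 := ⟨by simp, by simp, by simp⟩
    refine (hnull.seminorm_sum_le_of_support_subset q ha (by simp)).trans ?_
    rw [card_prefixEntries π hk, Nat.cast_zero, mul_zero, sub_zero]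
    exact_mod_cast Nat.mul_le_mul_left _ hke

end Bounds

theorem stmt4_general {m : ℕ} {J E : Type*} [Fintype J] [AddCommGroup E] [Module ℝ E]
    [FiniteDimensional ℝ E] (q : Seminorm ℝ E) (u : Fin m → J → E) (hu : ∀ i j, q (u i j) ≤ 1)
    (hzero : ∑ i, ∑ j, u i j = 0) :
    ∃ π : J → Equiv.Perm (Fin m), ∀ k ≤ m,
      q (∑ i ∈ {i : Fin m | (i : ℕ) < k}, ∑ j, u (π j i) j) ≤
        min (Fintype.card J * finrank ℝ E : ℝ) (2 * finrank ℝ E) := by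
  let a : Fin m × J → E := fun p => u p.1 p.2
  have ha (p) : q (a p) ≤ 1 := hu p.1 p.2
  have hone : IsSparseBalancedWeight a m 1 :=
    { mem_Icc := by simp
      color_sum := by simp
      vector_sum := by simpa [a, Fintype.sum_prod_type] using hzero
      card_support_le := by simp [mul_comm] }
  obtain ⟨v, -, hv, hmono⟩ := hone.exists_monotone_support
  obtain ⟨π, hπ⟩ := exists_perm_prefixEntries_subset hv hmono
  refine ⟨π, fun k hk => ?_⟩
  rw [← sum_prefixEntries π k a]
  refine le_min ?_ ?_
  · exact seminorm_sum_prefixEntries_le q ha (fun l => (hv l).toIsBalancedWeight)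
      (fun l => (hπ l).2) hk
  · let l : Fin (m + 1) := ⟨k, by omega⟩
    exact (hv l).seminorm_sum_le_of_subset_support q ha (hπ l).1 (card_prefixEntries π hk)

lemma two_mul_le_forty_mul_pow_five (d : ℕ) : (2 * d : ℝ) ≤ 40 * (d : ℝ) ^ 5 := by
  have hpow : (d : ℝ) ≤ (d : ℝ) ^ 5 := by exact_mod_cast Nat.le_self_pow (by norm_num) d
  linarith [d.cast_nonneg (α := ℝ)]

theorem stmt4 (d m n : ℕ) (N : (Fin d → ℝ) → ℝ)
    (hN_add : ∀ x y, N (x + y) ≤ N x + N y)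
    (hN_smul : ∀ (c : ℝ) x, N (c • x) = |c| * N x)
    (u : Fin m → Fin n → Fin d → ℝ)
    (hu_norm : ∀ i j, N (u i j) ≤ 1)
    (hzero : ∑ i, ∑ j, u i j = 0) :
    ∃ π : Fin n → Equiv.Perm (Fin m), ∀ k : ℕ, 1 ≤ k → k ≤ m →
      N (∑ i ∈ Finset.univ.filter (fun i : Fin m => (i:ℕ) < k),
          ∑ j, u (π j i) j) ≤ min ((n:ℝ) * d) (40 * (d:ℝ)^5) := by
  obtain ⟨π, hπ⟩ := stmt4_general (Seminorm.of N hN_add hN_smul) u hu_norm hzero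
  simp only [Fintype.card_fin, finrank_fin_fun] at hπ
  exact ⟨π, fun k _ hk => (hπ k hk).trans (min_le_min_left _ (two_mul_le_forty_mul_pow_five d))⟩
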